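/- arXiv:2307.02964 — 2 statements merged into one kernel-verified Lean document; each statement's English description precedes it below -/
import Mathlib

section
/- Let M be an m×m complex matrix such that for every nonzero t ∈ ℂ there exists an invertible m×m complex matrix f with f⁻¹·(t·M)·f = M. Then M is nilpotent, i.e. M^m = 0. -/
open Matrix

/-- Let `M` be an `m × m` complex matrix such that for every nonzero `t ∈ ℂ`
there exists an invertible `m × m` complex matrix `f` with `f⁻¹ (t M) f = M`.
Then `M` is nilpotent: `M ^ m = 0`. -/
theorem nilpotent_of_similar_to_all_scalings (m : ℕ) (M : Matrix (Fin m) (Fin m) ℂ)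
    (h : ∀ t : ℂ, t ≠ 0 → ∃ f : Matrix (Fin m) (Fin m) ℂ,
      IsUnit f ∧ f⁻¹ * (t • M) * f = M) :
    M ^ m = 0 := by
  have hmon : M.charpoly.Monic := M.charpoly_monic
  have hch : ∀ t : ℂ, t ≠ 0 → (t • M).charpoly = M.charpoly := by
    intro t ht
    obtain ⟨f, ⟨u, rfl⟩, hf⟩ := h t ht
    have := Matrix.charpoly_units_conj' u (t • M)
    rw [← this, hf]
  have key : ∀ μ ∈ M.charpoly.roots, μ = 0 := by
    intro μ hμ
    by_contra hne
    have hroot : (Matrix.scalar (Fin m) μ - M).det = 0 := by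
      rw [← Matrix.eval_charpoly]
      exact Polynomial.isRoot_of_mem_roots hμ
    refine hmon.ne_zero (Polynomial.eq_zero_of_infinite_isRoot _ ?_)
    refine Set.Infinite.mono (s := {(0 : ℂ)}ᶜ) ?_ (Set.finite_singleton _).infinite_compl
    intro s hs
    have hs : s ≠ 0 := hs
    have ht : s / μ ≠ 0 := div_ne_zero hs hne
    change M.charpoly.eval s = 0
    rw [← hch _ ht, Matrix.eval_charpoly]
    have : Matrix.scalar (Fin m) s - (s / μ) • M
        = (s / μ) • (Matrix.scalar (Fin m) μ - M) := by
      ext i j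
      by_cases hij : i = j
      · subst hij
        simp [mul_sub, div_mul_cancel₀ _ hne]
      · simp [hij]
    rw [this, Matrix.det_smul, hroot, mul_zero]
  have hsp : M.charpoly.Splits := IsAlgClosed.splits _
  have hcard : M.charpoly.roots.card = m := by
    rw [← hsp.natDegree_eq_card_roots, Matrix.charpoly_natDegree_eq_dim, Fintype.card_fin]
  have hroots : M.charpoly.roots = Multiset.replicate m 0 :=
    Multiset.eq_replicate.2 ⟨hcard, key⟩
  have hX : M.charpoly = Polynomial.X ^ m := by
    rw [hsp.eq_prod_roots_of_monic hmon, hroots]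
    simp
  have := Matrix.aeval_self_charpoly M
  rwa [hX, map_pow, Polynomial.aeval_X] at this
end

section
/- Two complex 2×2 matrices M and N have no common eigenvector if and only if det(M·N − N·M) ≠ 0. (Here a common eigenvector is a nonzero vector v ∈ ℂ² such that M·v = a·v and N·v = b·v for some scalars a, b ∈ ℂ.) -/
open Matrix

lemma aux_root (A B C : ℂ) : ∃ x y : ℂ, (x ≠ 0 ∨ y ≠ 0) ∧ A*x^2 + B*x*y + C*y^2 = 0 := by
  by_cases hA : A = 0
  · exact ⟨1, 0, by simp, by simp [hA]⟩
  · obtain ⟨s, hs⟩ := IsAlgClosed.exists_pow_nat_eq (B^2 - 4*A*C) (n := 2) (by norm_num)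
    exact ⟨-B + s, 2*A, Or.inr (by simpa using hA), by linear_combination A * hs⟩

lemma aux_common (A B C D E F : ℂ)
    (h : (A*F - C*D)^2 = (A*E - B*D)*(B*F - C*E)) :
    ∃ x y : ℂ, (x ≠ 0 ∨ y ≠ 0) ∧ A*x^2 + B*x*y + C*y^2 = 0 ∧ D*x^2 + E*x*y + F*y^2 = 0 := by
  by_cases hp : A*E - B*D = 0
  · have hq : A*F - C*D = 0 := by
      have : (A*F - C*D)^2 = 0 := by rw [h, hp, zero_mul]
      exact pow_eq_zero_iff (by norm_num) |>.1 this
    by_cases hr : B*F - C*E = 0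
    · by_cases hz : A = 0 ∧ B = 0 ∧ C = 0
      · obtain ⟨rfl, rfl, rfl⟩ := hz
        obtain ⟨x, y, hxy, h1⟩ := aux_root D E F
        exact ⟨x, y, hxy, by ring, h1⟩
      · obtain ⟨x, y, hxy, h1⟩ := aux_root A B C
        refine ⟨x, y, hxy, h1, ?_⟩
        by_contra hne
        apply hz
        refine ⟨?_, ?_, ?_⟩
        · refine (mul_eq_zero.1 (?_ : A * (D*x^2 + E*x*y + F*y^2) = 0)).resolve_right hne
          linear_combination D * h1 + x*y*hp + y^2*hq
        · refine (mul_eq_zero.1 (?_ : B * (D*x^2 + E*x*y + F*y^2) = 0)).resolve_right hne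
          linear_combination E * h1 - x^2*hp + y^2*hr
        · refine (mul_eq_zero.1 (?_ : C * (D*x^2 + E*x*y + F*y^2) = 0)).resolve_right hne
          linear_combination F * h1 - x^2*hq - x*y*hr
    · refine ⟨1, 0, by simp, ?_, ?_⟩
      · refine (mul_eq_zero.1 (?_ : (A*1^2 + B*1*0 + C*0^2) * (B*F - C*E) = 0)).resolve_right hr
        linear_combination B*hq - C*hp
      · refine (mul_eq_zero.1 (?_ : (D*1^2 + E*1*0 + F*0^2) * (B*F - C*E) = 0)).resolve_right hr
        linear_combination E*hq - F*hp
  · refine ⟨-(A*F - C*D), A*E - B*D, Or.inr hp, ?_, ?_⟩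
    · linear_combination A*h
    · linear_combination D*h

lemma aux_eig (M : Matrix (Fin 2) (Fin 2) ℂ) (x y : ℂ) (hxy : x ≠ 0 ∨ y ≠ 0)
    (h : M 1 0 * x^2 + (M 1 1 - M 0 0)*x*y + (-M 0 1)*y^2 = 0) :
    ∃ a : ℂ, M.mulVec ![x, y] = a • ![x, y] := by
  rcases hxy with hx | hy
  · refine ⟨(M 0 0 * x + M 0 1 * y)/x, ?_⟩
    ext i
    fin_cases i
    · simp [Matrix.mulVec, dotProduct, Fin.sum_univ_two]
      field_simp
    · simp [Matrix.mulVec, dotProduct, Fin.sum_univ_two]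
      field_simp
      linear_combination h
  · refine ⟨(M 1 0 * x + M 1 1 * y)/y, ?_⟩
    ext i
    fin_cases i
    · simp [Matrix.mulVec, dotProduct, Fin.sum_univ_two]
      field_simp
      linear_combination -h
    · simp [Matrix.mulVec, dotProduct, Fin.sum_univ_two]
      field_simp

/-- Two complex `2 × 2` matrices `M` and `N` have no common eigenvector if
and only if `det (M N − N M) ≠ 0`. A common eigenvector is a nonzero `v ∈ ℂ²` with
`M v = a v` and `N v = b v` for some scalars `a, b ∈ ℂ`. -/
theorem no_common_eigenvector_iff_det_commutator_ne_zero
    (M N : Matrix (Fin 2) (Fin 2) ℂ) :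
    (¬ ∃ v : Fin 2 → ℂ, v ≠ 0 ∧ ∃ a b : ℂ, M.mulVec v = a • v ∧ N.mulVec v = b • v) ↔
      (M * N - N * M).det ≠ 0 := by
  refine not_congr ⟨?_, ?_⟩
  · rintro ⟨v, hv, a, b, h1, h2⟩
    refine Matrix.exists_mulVec_eq_zero_iff.1 ⟨v, hv, ?_⟩
    rw [Matrix.sub_mulVec, ← Matrix.mulVec_mulVec, ← Matrix.mulVec_mulVec, h1, h2,
      Matrix.mulVec_smul, Matrix.mulVec_smul, h1, h2, smul_comm, sub_self]
  · intro h
    rw [Matrix.det_fin_two] at h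
    simp only [Matrix.sub_apply, Matrix.mul_apply, Fin.sum_univ_two] at h
    obtain ⟨x, y, hxy, hM, hN⟩ := aux_common (M 1 0) (M 1 1 - M 0 0) (-M 0 1)
      (N 1 0) (N 1 1 - N 0 0) (-N 0 1) (by linear_combination -h)
    obtain ⟨a, ha⟩ := aux_eig M x y hxy hM
    obtain ⟨b, hb⟩ := aux_eig N x y hxy hN
    refine ⟨![x, y], ?_, a, b, ha, hb⟩
    intro h0
    have e0 := congrFun h0 0
    have e1 := congrFun h0 1
    simp at e0 e1
    tauto
end
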